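/- Assume 0 ≤ α < N, p, q > 0, ρ > 0, μ ∈ ℝ, and that the Dirichlet eigenpair hypothesis holds for (Ω, λ₁, φ). If μ > C_{H,Ω} = λ₁ + ((N−2)/2)², then the inequality (E): −Δu − μ|x|^{−2}u ≥ (|x|^{−α} * u^p) u^q has no positive solution in C_Ω^ρ. -/

import Mathlib

open MeasureTheory Real Set
open scoped ENNReal NNReal

noncomputable section

/-- Euclidean space `ℝ^N`. -/
abbrev Euc (N : ℕ) := EuclideanSpace ℝ (Fin N)

/-- The Euclidean Laplacian `Δu(x) = ∑ ∂²u/∂xᵢ²(x)`, the trace of the Hessian. -/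
def lap (N : ℕ) (u : Euc N → ℝ) (x : Euc N) : ℝ :=
  ∑ i : Fin N,
    iteratedFDeriv ℝ 2 u x ![EuclideanSpace.single i 1, EuclideanSpace.single i 1]

/-- The open cone `C_Ω^ρ = {x : |x| > ρ, x/|x| ∈ Ω}`. -/
def coneGT (N : ℕ) (ρ : ℝ) (Ω : Set (Euc N)) : Set (Euc N) :=
  {x | ρ < ‖x‖ ∧ ‖x‖⁻¹ • x ∈ Ω}

/-- The full open cone `C_Ω = {x ≠ 0 : x/|x| ∈ Ω}`. -/
def cone (N : ℕ) (Ω : Set (Euc N)) : Set (Euc N) :=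
  {x | x ≠ 0 ∧ ‖x‖⁻¹ • x ∈ Ω}

/-- `Ω` is a nonempty, connected, relatively open subset of the unit sphere `S^{N-1}`. -/
def IsConeDomain (N : ℕ) (Ω : Set (Euc N)) : Prop :=
  Ω ⊆ Metric.sphere (0 : Euc N) 1 ∧ IsConnected Ω ∧
    IsOpen {ω : Metric.sphere (0 : Euc N) 1 | (ω : Euc N) ∈ Ω}

/-- The convolution `(|x|^{-α} * f)(x) = ∫_{C_Ω^ρ} f(y)|x-y|^{-α} dy`, valued in `[0,∞]`. -/
def rieszConv (N : ℕ) (α ρ : ℝ) (Ω : Set (Euc N)) (f : Euc N → ℝ) (x : Euc N) : ℝ≥0∞ :=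
  ∫⁻ y in coneGT N ρ Ω, ENNReal.ofReal (f y * ‖x - y‖ ^ (-α))

/-- Dirichlet eigenpair hypothesis for `(Ω, λ₁, φ)`: `φ` is continuous on the closure of `Ω`,
positive on `Ω`, vanishing on the relative boundary, with maximum `1`, and its 0-homogeneous
extension `Φ(x) = φ(x/|x|)` is `C²` on the open cone and satisfies `ΔΦ = -λ₁|x|⁻²Φ`. -/
structure DirichletEigenpair (N : ℕ) (Ω : Set (Euc N)) (lam1 : ℝ) (φ : Euc N → ℝ) : Prop where
  contOn : ContinuousOn φ (closure Ω)
  pos : ∀ ω ∈ Ω, 0 < φ ω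
  bdryZero : ∀ ω ∈ closure Ω \ Ω, φ ω = 0
  le_one : ∀ ω ∈ closure Ω, φ ω ≤ 1
  max_one : ∃ ω ∈ closure Ω, φ ω = 1
  smoothExt : ContDiffOn ℝ 2 (fun x => φ (‖x‖⁻¹ • x)) (cone N Ω)
  eigen : ∀ x ∈ cone N Ω,
    lap N (fun y => φ (‖y‖⁻¹ • y)) x = -lam1 * ‖x‖ ^ (-(2:ℝ)) * φ (‖x‖⁻¹ • x)

/-- The Hardy constant `C_{H,Ω} = λ₁ + ((N-2)/2)²`. -/
def CHconst (N : ℕ) (lam1 : ℝ) : ℝ := lam1 + (((N : ℝ) - 2) / 2) ^ 2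

/-- The smaller root `γ_*` of `γ(γ + N - 2) = λ₁ - μ`. -/
def gammaStar (N : ℕ) (lam1 μ : ℝ) : ℝ :=
  (-((N : ℝ) - 2) - Real.sqrt (((N : ℝ) - 2) ^ 2 + 4 * (lam1 - μ))) / 2

/-- A positive (classical) solution of `(E) : -Δu - μ|x|⁻²u ≥ (|x|^{-α} * uᵖ) u^q` in `C_Ω^ρ`. -/
def IsPosSolE (N : ℕ) (ρ μ α p q : ℝ) (Ω : Set (Euc N)) (u : Euc N → ℝ) : Prop :=
  ContDiffOn ℝ 2 u (coneGT N ρ Ω) ∧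
  ContinuousOn u (closure (coneGT N ρ Ω)) ∧
  (∀ x ∈ coneGT N ρ Ω, 0 < u x) ∧
  (∀ x ∈ coneGT N ρ Ω, rieszConv N α ρ Ω (fun y => u y ^ p) x < ⊤) ∧
  (∀ x ∈ coneGT N ρ Ω,
    (rieszConv N α ρ Ω (fun y => u y ^ p) x).toReal * u x ^ q ≤
      -lap N u x - μ * ‖x‖ ^ (-(2:ℝ)) * u x)

/-- A positive solution of `(Z) : -Δu - μ|x|⁻²u ≥ (∫_{C_Ω^ρ} uᵖ) u^q` in `C_Ω^ρ`. -/
def IsPosSolZ (N : ℕ) (ρ μ p q : ℝ) (Ω : Set (Euc N)) (u : Euc N → ℝ) : Prop :=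
  ContDiffOn ℝ 2 u (coneGT N ρ Ω) ∧
  ContinuousOn u (closure (coneGT N ρ Ω)) ∧
  (∀ x ∈ coneGT N ρ Ω, 0 < u x) ∧
  (∫⁻ y in coneGT N ρ Ω, ENNReal.ofReal (u y ^ p)) < ⊤ ∧
  (∀ x ∈ coneGT N ρ Ω,
    (∫⁻ y in coneGT N ρ Ω, ENNReal.ofReal (u y ^ p)).toReal * u x ^ q ≤
      -lap N u x - μ * ‖x‖ ^ (-(2:ℝ)) * u x)

/-- A positive solution `(u, v)` of the system `(S)` in `C_Ω^ρ`. -/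
def IsPosSolS (N : ℕ) (ρ μ α p q s : ℝ) (Ω : Set (Euc N)) (u v : Euc N → ℝ) : Prop :=
  ContDiffOn ℝ 2 u (coneGT N ρ Ω) ∧ ContinuousOn u (closure (coneGT N ρ Ω)) ∧
  ContDiffOn ℝ 2 v (coneGT N ρ Ω) ∧ ContinuousOn v (closure (coneGT N ρ Ω)) ∧
  (∀ x ∈ coneGT N ρ Ω, 0 < u x) ∧ (∀ x ∈ coneGT N ρ Ω, 0 < v x) ∧
  (∀ x ∈ coneGT N ρ Ω, rieszConv N α ρ Ω (fun y => v y ^ p) x < ⊤) ∧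
  (∀ x ∈ coneGT N ρ Ω,
    (rieszConv N α ρ Ω (fun y => v y ^ p) x).toReal * v x ^ q ≤
      -lap N u x - μ * ‖x‖ ^ (-(2:ℝ)) * u x) ∧
  (∀ x ∈ coneGT N ρ Ω, u x ^ s ≤ -lap N v x - μ * ‖x‖ ^ (-(2:ℝ)) * v x)

/-!
The mode `w = |x| ^ (-(N - 2) / 2) sin (κ log (|x| / r)) φ (x / |x|)` is positive on a bounded nodal
shell of the cone, vanishes on the boundary of the shell, and satisfies
`-Δ w = (C_{H,Ω} + κ ^ 2) |x|⁻² w` there. If `u > 0` satisfies `-Δ u ≥ μ |x|⁻² u` on the shell, then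
testing with `w_δ ^ 2 / u` for smooth truncations `w_δ = f_δ(w)`, `0 ≤ f_δ' ≤ 1`, supported in
`{w ≥ δ}`, gives by Picone's inequality
`μ ∫ |x|⁻² w_δ ^ 2 ≤ ∫ |∇ w_δ| ^ 2 ≤ ∫ ∇ w_δ · ∇ w = (C_{H,Ω} + κ ^ 2) ∫ |x|⁻² w_δ w`.
As `δ → 0` this becomes `μ ≤ C_{H,Ω} + κ ^ 2`. Such shells exist at every distance from the vertex
and for every `κ > 0`, so `μ ≤ C_{H,Ω}`.
-/

open InnerProductSpace Laplacian Gradient Filter Topology Module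

section FirstOrderCalculus

variable {E : Type*} [NormedAddCommGroup E]

lemma contDiffAt_two_eventually_differentiableAt [NormedSpace ℝ E] {f : E → ℝ} {x : E}
    (hf : ContDiffAt ℝ 2 f x) : ∀ᶠ y in 𝓝 x, DifferentiableAt ℝ f y :=
  (hf.eventually (by simp)).mono fun _ hy => hy.differentiableAt two_ne_zero

lemma contDiffAt_two_differentiableAt_fderiv [NormedSpace ℝ E] {f : E → ℝ} {x : E}
    (hf : ContDiffAt ℝ 2 f x) : DifferentiableAt ℝ (fderiv ℝ f) x :=
  (hf.fderiv_right (m := 1) le_rfl).differentiableAt one_ne_zero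

lemma fderiv_apply_self_of_forall_smul_eq [NormedSpace ℝ E] {f : E → ℝ}
    (hf : ∀ t : ℝ, 0 < t → ∀ y, f (t • y) = f y) (x : E) : fderiv ℝ f x x = 0 := by
  by_cases hd : DifferentiableAt ℝ f x
  · have hline : HasDerivAt (fun t : ℝ => f (x + t • x)) (fderiv ℝ f x x) 0 :=
      hd.hasFDerivAt.hasLineDerivAt x
    have hconst : (fun t : ℝ => f (x + t • x)) =ᶠ[𝓝 0] fun _ => f x := by
      filter_upwards [lt_mem_nhds (show (-1 : ℝ) < 0 by norm_num)] with t ht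
      rw [show x + t • x = (1 + t) • x by rw [add_smul, one_smul], hf _ (by linarith)]
    exact hline.unique ((hasDerivAt_const 0 (f x)).congr_of_eventuallyEq hconst)
  · rw [fderiv_zero_of_not_differentiableAt hd, _root_.zero_apply]

lemma contDiffAt_log_norm [InnerProductSpace ℝ E] {n : WithTop ℕ∞} {x : E} (hx : x ≠ 0) :
    ContDiffAt ℝ n (fun y : E => Real.log ‖y‖) x :=
  (contDiffAt_norm ℝ hx).log (norm_ne_zero_iff.mpr hx)

variable [InnerProductSpace ℝ E] [CompleteSpace E] {f g : E → ℝ} {x : E}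

lemma gradient_mul (hf : DifferentiableAt ℝ f x) (hg : DifferentiableAt ℝ g x) :
    ∇ (f * g) x = f x • ∇ g x + g x • ∇ f x := by
  refine ext_inner_right ℝ fun v => ?_
  simp [inner_add_left, inner_smul_left, inner_gradient_left, fderiv_mul hf hg]

lemma gradient_comp {k : ℝ → ℝ} (hk : DifferentiableAt ℝ k (f x)) (hf : DifferentiableAt ℝ f x) :
    ∇ (k ∘ f) x = deriv k (f x) • ∇ f x := by
  refine ext_inner_right ℝ fun v => ?_
  simp [inner_smul_left, inner_gradient_left, fderiv_comp x hk hf, mul_comm]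

lemma gradient_congr (h : f =ᶠ[𝓝 x] g) : ∇ f x = ∇ g x := by
  rw [gradient, gradient, h.fderiv_eq]

lemma gradient_of_notMem_tsupport (h : x ∉ tsupport f) : ∇ f x = 0 := by
  rw [gradient, fderiv_of_notMem_tsupport ℝ h, map_zero]

lemma gradient_norm_sq (x : E) : ∇ (fun y : E => ‖y‖ ^ 2) x = (2 : ℝ) • x := by
  refine ext_inner_right ℝ fun v => ?_
  simp [inner_gradient_left, inner_smul_left]

lemma gradient_log_norm (hx : x ≠ 0) : ∇ (fun y : E => Real.log ‖y‖) x = (‖x‖ ^ 2)⁻¹ • x := by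
  have hx2 : ‖x‖ ^ 2 ≠ 0 := by positivity
  have hlog : HasDerivAt (fun s : ℝ => Real.log s / 2) ((‖x‖ ^ 2)⁻¹ / 2) (‖x‖ ^ 2) :=
    (Real.hasDerivAt_log hx2).div_const 2
  have hcomp : (fun y : E => Real.log ‖y‖) = (fun s => Real.log s / 2) ∘ fun y => ‖y‖ ^ 2 := by
    ext y
    simp
  rw [hcomp, gradient_comp (f := fun y : E => ‖y‖ ^ 2) hlog.differentiableAt
    (hasStrictFDerivAt_norm_sq x).hasFDerivAt.differentiableAt, hlog.deriv, gradient_norm_sq,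
    smul_smul, div_mul_cancel₀ _ two_ne_zero]

/-- Picone's inequality. -/
lemma inner_gradient_sq_div_gradient_le {β u : E → ℝ}
    (hβ : DifferentiableAt ℝ β x) (hu : DifferentiableAt ℝ u x) (hux : u x ≠ 0) :
    ⟪∇ (fun y => β y ^ 2 / u y) x, ∇ u x⟫_ℝ ≤ ‖∇ β x‖ ^ 2 := by
  have hfactor : (fun y => β y ^ 2 / u y) = (β * β) * (Inv.inv ∘ u) := by
    ext y
    simp [pow_two, div_eq_mul_inv]
  have hgrad : ∇ (fun y => β y ^ 2 / u y) x =
      (2 * (β x / u x)) • ∇ β x - (β x / u x) ^ 2 • ∇ u x := by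
    rw [hfactor, gradient_mul (hβ.mul hβ) ((differentiableAt_inv hux).comp x hu),
      gradient_mul hβ hβ, gradient_comp (differentiableAt_inv hux) hu, deriv_inv]
    simp only [Pi.mul_apply, Function.comp_apply]
    module
  have hgap : ‖∇ β x - (β x / u x) • ∇ u x‖ ^ 2 =
      ‖∇ β x‖ ^ 2 - ⟪∇ (fun y => β y ^ 2 / u y) x, ∇ u x⟫_ℝ := by
    rw [norm_sub_sq_real, hgrad, inner_sub_left, real_inner_smul_left, real_inner_smul_left,
      real_inner_smul_right, real_inner_self_eq_norm_sq, norm_smul, mul_pow, Real.norm_eq_abs,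
      sq_abs]
    ring
  linarith [sq_nonneg ‖∇ β x - (β x / u x) • ∇ u x‖]

end FirstOrderCalculus

section Laplacian

variable {E : Type*} [NormedAddCommGroup E] [InnerProductSpace ℝ E] [FiniteDimensional ℝ E]
  {f g : E → ℝ} {x : E}

lemma laplacian_eq_sum_fderiv_fderiv {ι : Type*} [Fintype ι] (b : OrthonormalBasis ι ℝ E)
    (f : E → ℝ) (x : E) : Δ f x = ∑ i, fderiv ℝ (fderiv ℝ f) x (b i) (b i) := by
  simp [laplacian_eq_iteratedFDeriv_orthonormalBasis f b, iteratedFDeriv_two_apply]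

lemma continuousAt_laplacian (hf : ContDiffAt ℝ 2 f x) : ContinuousAt (Δ f) x := by
  let b := stdOrthonormalBasis ℝ E
  have hsecond : ContinuousAt (fderiv ℝ (fderiv ℝ f)) x :=
    ((hf.fderiv_right (m := 1) le_rfl).fderiv_right (m := 0) (by simp)).continuousAt
  rw [funext (laplacian_eq_sum_fderiv_fderiv b f)]
  exact tendsto_finsetSum _ fun i _ =>
    (hsecond.clm_apply continuousAt_const).clm_apply continuousAt_const

lemma inner_gradient_gradient_eq_sum {ι : Type*} [Fintype ι] (b : OrthonormalBasis ι ℝ E)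
    (f g : E → ℝ) (x : E) :
    ⟪∇ f x, ∇ g x⟫_ℝ = ∑ i, fderiv ℝ f x (b i) * fderiv ℝ g x (b i) := by
  rw [← b.sum_inner_mul_inner]
  simp only [inner_gradient_left, real_inner_comm (∇ g x)]

lemma laplacian_mul (hf : ContDiffAt ℝ 2 f x) (hg : ContDiffAt ℝ 2 g x) :
    Δ (f * g) x = f x * Δ g x + 2 * ⟪∇ f x, ∇ g x⟫_ℝ + g x * Δ f x := by
  have hfirst : fderiv ℝ (f * g) =ᶠ[𝓝 x] fun y => f y • fderiv ℝ g y + g y • fderiv ℝ f y := by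
    filter_upwards [contDiffAt_two_eventually_differentiableAt hf,
      contDiffAt_two_eventually_differentiableAt hg] with y hfy hgy using fderiv_mul hfy hgy
  have hsecond : HasFDerivAt (fderiv ℝ (f * g)) _ x :=
    (((hf.differentiableAt two_ne_zero).hasFDerivAt.smul
      (contDiffAt_two_differentiableAt_fderiv hg).hasFDerivAt).add
      ((hg.differentiableAt two_ne_zero).hasFDerivAt.smul
      (contDiffAt_two_differentiableAt_fderiv hf).hasFDerivAt)).congr_of_eventuallyEq hfirst
  let b := stdOrthonormalBasis ℝ E
  simp only [laplacian_eq_sum_fderiv_fderiv b, hsecond.fderiv, inner_gradient_gradient_eq_sum b,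
    Finset.mul_sum, ← Finset.sum_add_distrib]
  refine Finset.sum_congr rfl fun i _ => ?_
  simp
  ring

lemma laplacian_comp {k : ℝ → ℝ} (hk : ContDiffAt ℝ 2 k (f x)) (hf : ContDiffAt ℝ 2 f x) :
    Δ (k ∘ f) x = deriv (deriv k) (f x) * ‖∇ f x‖ ^ 2 + deriv k (f x) * Δ f x := by
  have hfirst : fderiv ℝ (k ∘ f) =ᶠ[𝓝 x] fun y => deriv k (f y) • fderiv ℝ f y := by
    filter_upwards [hf.continuousAt.eventually (contDiffAt_two_eventually_differentiableAt hk),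
      contDiffAt_two_eventually_differentiableAt hf] with y hky hfy
    ext v
    simp [fderiv_comp y hky hfy, mul_comm]
  have hk' : DifferentiableAt ℝ (deriv k) (f x) :=
    (contDiffAt_two_differentiableAt_fderiv hk).clm_apply (differentiableAt_const 1)
  have hsecond : HasFDerivAt (fderiv ℝ (k ∘ f)) _ x :=
    ((hk'.hasDerivAt.comp_hasFDerivAt x (hf.differentiableAt two_ne_zero).hasFDerivAt).smul
      (contDiffAt_two_differentiableAt_fderiv hf).hasFDerivAt).congr_of_eventuallyEq hfirst
  let b := stdOrthonormalBasis ℝ E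
  simp only [← real_inner_self_eq_norm_sq, laplacian_eq_sum_fderiv_fderiv b, hsecond.fderiv,
    inner_gradient_gradient_eq_sum b, Finset.mul_sum, ← Finset.sum_add_distrib]
  refine Finset.sum_congr rfl fun i _ => ?_
  simp
  ring

lemma laplacian_norm_sq (x : E) : Δ (fun y : E => ‖y‖ ^ 2) x = 2 * finrank ℝ E := by
  let b := stdOrthonormalBasis ℝ E
  let L : E →L[ℝ] E →L[ℝ] ℝ := 2 • innerSL ℝ
  have hsecond : HasFDerivAt (fderiv ℝ fun y : E => ‖y‖ ^ 2) L x := by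
    rw [fderiv_norm_sq]
    exact L.hasFDerivAt
  have hunit (i) : L (b i) (b i) = 2 := by
    change (2 • ⟪b i, b i⟫_ℝ : ℝ) = 2
    simp
  simp [laplacian_eq_sum_fderiv_fderiv b, hsecond.fderiv, hunit, mul_comm]

lemma laplacian_log_norm (hx : x ≠ 0) :
    Δ (fun y : E => Real.log ‖y‖) x = (‖x‖ ^ 2)⁻¹ * (finrank ℝ E - 2) := by
  have hx2 : ‖x‖ ^ 2 ≠ 0 := by positivity
  have hderiv : deriv (fun s : ℝ => Real.log s / 2) = fun s => s⁻¹ / 2 := by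
    ext s
    simp
  have hcomp : (fun y : E => Real.log ‖y‖) = (fun s => Real.log s / 2) ∘ fun y => ‖y‖ ^ 2 := by
    ext y
    simp
  rw [hcomp, laplacian_comp (f := fun y : E => ‖y‖ ^ 2) ((contDiffAt_log.mpr hx2).div_const 2)
    (contDiff_norm_sq ℝ).contDiffAt, laplacian_norm_sq, gradient_norm_sq, hderiv]
  simp [norm_smul]
  field_simp
  ring

lemma laplacian_comp_log_norm {k : ℝ → ℝ} (hx : x ≠ 0) (hk : ContDiffAt ℝ 2 k (Real.log ‖x‖)) :
    Δ (fun y : E => k (Real.log ‖y‖)) x = (‖x‖ ^ 2)⁻¹ *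
      (deriv (deriv k) (Real.log ‖x‖) + (finrank ℝ E - 2) * deriv k (Real.log ‖x‖)) := by
  have hx0 : ‖x‖ ≠ 0 := norm_ne_zero_iff.mpr hx
  rw [show (fun y : E => k (Real.log ‖y‖)) = k ∘ fun y => Real.log ‖y‖ from rfl,
    laplacian_comp (f := fun y : E => Real.log ‖y‖) hk (contDiffAt_log_norm hx),
    laplacian_log_norm hx, gradient_log_norm hx]
  simp [norm_smul]
  field_simp

lemma laplacian_comp_log_norm_mul {k : ℝ → ℝ} (hx : x ≠ 0)
    (hk : ContDiffAt ℝ 2 k (Real.log ‖x‖)) (hf : ContDiffAt ℝ 2 f x)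
    (hf0 : ∀ t : ℝ, 0 < t → ∀ y, f (t • y) = f y) :
    Δ (fun y => k (Real.log ‖y‖) * f y) x = (‖x‖ ^ 2)⁻¹ *
      (deriv (deriv k) (Real.log ‖x‖) + (finrank ℝ E - 2) * deriv k (Real.log ‖x‖)) * f x +
      k (Real.log ‖x‖) * Δ f x := by
  have hradial : ContDiffAt ℝ 2 (fun y : E => k (Real.log ‖y‖)) x :=
    hk.comp x (contDiffAt_log_norm hx)
  have horth : ⟪∇ (fun y : E => k (Real.log ‖y‖)) x, ∇ f x⟫_ℝ = 0 := by
    have hgrad := gradient_comp (f := fun y : E => Real.log ‖y‖) (hk.differentiableAt two_ne_zero)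
      ((contDiffAt_log_norm hx (n := 1)).differentiableAt one_ne_zero)
    rw [Function.comp_def, gradient_log_norm hx] at hgrad
    rw [hgrad, real_inner_comm, inner_smul_right, inner_smul_right, inner_gradient_left,
      fderiv_apply_self_of_forall_smul_eq hf0, mul_zero, mul_zero]
  have hmul := laplacian_mul hradial hf
  rw [horth, laplacian_comp_log_norm hx hk] at hmul
  rw [show (fun y => k (Real.log ‖y‖) * f y) = (fun y => k (Real.log ‖y‖)) * f from rfl, hmul]
  ring

end Laplacian

section TestFunctions

variable {E : Type*} [NormedAddCommGroup E]

lemma contDiff_of_contDiffAt_tsupport [NormedSpace ℝ E] {n : WithTop ℕ∞} {f : E → ℝ}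
    (h : ∀ x ∈ tsupport f, ContDiffAt ℝ n f x) : ContDiff ℝ n f := by
  refine contDiff_iff_contDiffAt.mpr fun x => ?_
  by_cases hx : x ∈ tsupport f
  · exact h x hx
  · exact contDiffAt_const.congr_of_eventuallyEq (notMem_tsupport_iff_eventuallyEq.mp hx)

lemma integrable_mul_of_hasCompactSupport {X : Type*} [TopologicalSpace X] [MeasurableSpace X]
    [OpensMeasurableSpace X] {ν : Measure X} [IsFiniteMeasureOnCompacts ν] {f g : X → ℝ}
    (hf : Continuous f) (hfc : HasCompactSupport f) (hg : ∀ x ∈ tsupport f, ContinuousAt g x) :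
    Integrable (fun x => f x * g x) ν := by
  have hcont : Continuous (fun x => f x * g x) := continuous_of_tsupport fun x hx =>
    hf.continuousAt.mul (hg x (tsupport_mul_subset_left hx))
  exact hcont.integrable_of_hasCompactSupport hfc.mul_right

end TestFunctions

section IntegralIdentities

variable {E : Type*} [NormedAddCommGroup E] [InnerProductSpace ℝ E] [FiniteDimensional ℝ E]
  [MeasurableSpace E] [BorelSpace E] {ν : Measure E} {ψ β u w : E → ℝ}

lemma integrable_inner_gradient_gradient [IsFiniteMeasureOnCompacts ν] (hψ : ContDiff ℝ 1 ψ)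
    (hψc : HasCompactSupport ψ) (hw : ∀ x ∈ tsupport ψ, ContDiffAt ℝ 1 w x) :
    Integrable (fun x => ⟪∇ ψ x, ∇ w x⟫_ℝ) ν := by
  let b := stdOrthonormalBasis ℝ E
  simp only [inner_gradient_gradient_eq_sum b]
  refine integrable_finsetSum _ fun i _ => integrable_mul_of_hasCompactSupport
    ((hψ.continuous_fderiv one_ne_zero).clm_apply continuous_const) (hψc.fderiv_apply ℝ (b i))
    fun x hx => ?_
  exact ((hw x (tsupport_fderiv_apply_subset ℝ (b i) hx)).fderiv_right
    (m := 0) (by simp)).continuousAt.clm_apply continuousAt_const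

lemma integrable_norm_gradient_sq [IsFiniteMeasureOnCompacts ν] (hψ : ContDiff ℝ 1 ψ)
    (hψc : HasCompactSupport ψ) :
    Integrable (fun x => ‖∇ ψ x‖ ^ 2) ν := by
  simpa only [real_inner_self_eq_norm_sq] using
    integrable_inner_gradient_gradient (ν := ν) hψ hψc fun x _ => hψ.contDiffAt

variable [ν.IsAddHaarMeasure]

lemma integral_mul_fderiv_eq_neg_of_hasCompactSupport {g : E → ℝ} (hψ : ContDiff ℝ 1 ψ)
    (hψc : HasCompactSupport ψ) (hg : ∀ x ∈ tsupport ψ, ContDiffAt ℝ 1 g x) (v : E) :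
    ∫ x, ψ x * fderiv ℝ g x v ∂ν = -∫ x, fderiv ℝ ψ x v * g x ∂ν := by
  have hψ' : Continuous fun x => fderiv ℝ ψ x v :=
    (hψ.continuous_fderiv one_ne_zero).clm_apply continuous_const
  refine integral_mul_fderiv_eq_neg_fderiv_mul_of_integrable
    (integrable_mul_of_hasCompactSupport hψ' (hψc.fderiv_apply ℝ v) fun x hx =>
      (hg x (tsupport_fderiv_apply_subset ℝ v hx)).continuousAt)
    (integrable_mul_of_hasCompactSupport hψ.continuous hψc fun x hx => ?_)
    (integrable_mul_of_hasCompactSupport hψ.continuous hψc fun x hx => (hg x hx).continuousAt)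
    (fun x _ => hψ.contDiffAt.differentiableAt one_ne_zero)
    (fun x hx => (hg x hx).differentiableAt one_ne_zero)
  exact ((hg x hx).fderiv_right (m := 0) (by simp)).continuousAt.clm_apply continuousAt_const

lemma integral_inner_gradient_eq_integral_mul_neg_laplacian (hψ : ContDiff ℝ 1 ψ)
    (hψc : HasCompactSupport ψ) (hw : ∀ x ∈ tsupport ψ, ContDiffAt ℝ 2 w x) :
    ∫ x, ⟪∇ ψ x, ∇ w x⟫_ℝ ∂ν = ∫ x, ψ x * -Δ w x ∂ν := by
  let b := stdOrthonormalBasis ℝ E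
  have hw' (i) (x) (hx : x ∈ tsupport ψ) : ContDiffAt ℝ 1 (fun y => fderiv ℝ w y (b i)) x :=
    ((hw x hx).fderiv_right le_rfl).clm_apply contDiffAt_const
  have hψ' (i) : Continuous fun x => fderiv ℝ ψ x (b i) :=
    (hψ.continuous_fderiv one_ne_zero).clm_apply continuous_const
  have hlaplacian (x) : ψ x * -Δ w x =
      ∑ i, -(ψ x * fderiv ℝ (fun y => fderiv ℝ w y (b i)) x (b i)) := by
    by_cases hx : x ∈ tsupport ψ
    · have hsecond := contDiffAt_two_differentiableAt_fderiv (hw x hx)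
      simp [laplacian_eq_sum_fderiv_fderiv b, Finset.mul_sum,
        fderiv_clm_apply hsecond (differentiableAt_const _)]
    · simp [image_eq_zero_of_notMem_tsupport hx]
  simp only [hlaplacian, inner_gradient_gradient_eq_sum b]
  rw [integral_finsetSum, integral_finsetSum]
  · refine Finset.sum_congr rfl fun i _ => ?_
    rw [integral_neg, integral_mul_fderiv_eq_neg_of_hasCompactSupport hψ hψc (hw' i), neg_neg]
  · intro i _
    refine (integrable_mul_of_hasCompactSupport hψ.continuous hψc fun x hx => ?_).neg
    exact ((hw' i x hx).fderiv_right (m := 0) (by simp)).continuousAt.clm_apply continuousAt_const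
  · exact fun i _ => integrable_mul_of_hasCompactSupport (hψ' i) (hψc.fderiv_apply ℝ (b i))
      fun x hx => (hw' i x (tsupport_fderiv_apply_subset ℝ (b i) hx)).continuousAt

lemma integral_sq_div_mul_neg_laplacian_le (hβ : ContDiff ℝ 1 β) (hβc : HasCompactSupport β)
    (hu : ∀ x ∈ tsupport β, ContDiffAt ℝ 2 u x) (hu0 : ∀ x ∈ tsupport β, u x ≠ 0) :
    ∫ x, β x ^ 2 / u x * -Δ u x ∂ν ≤ ∫ x, ‖∇ β x‖ ^ 2 ∂ν := by
  have hsub : tsupport (fun x => β x ^ 2 / u x) ⊆ tsupport β := by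
    simpa only [pow_two, mul_div_assoc] using
      tsupport_mul_subset_left (f := β) (g := fun x => β x / u x)
  have hψ : ContDiff ℝ 1 fun x => β x ^ 2 / u x := contDiff_of_contDiffAt_tsupport fun x hx =>
    (hβ.contDiffAt.pow 2).div ((hu x (hsub hx)).of_le one_le_two) (hu0 x (hsub hx))
  have hψc : HasCompactSupport fun x => β x ^ 2 / u x :=
    hβc.mono' (subset_closure.trans hsub)
  have hpicone (x) : ⟪∇ (fun y => β y ^ 2 / u y) x, ∇ u x⟫_ℝ ≤ ‖∇ β x‖ ^ 2 := by
    by_cases hx : x ∈ tsupport β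
    · exact inner_gradient_sq_div_gradient_le (hβ.contDiffAt.differentiableAt one_ne_zero)
        ((hu x hx).differentiableAt two_ne_zero) (hu0 x hx)
    · rw [gradient_of_notMem_tsupport fun h => hx (hsub h), inner_zero_left]
      positivity
  rw [← integral_inner_gradient_eq_integral_mul_neg_laplacian hψ hψc fun x hx => hu x (hsub hx)]
  exact integral_mono (integrable_inner_gradient_gradient hψ hψc fun x hx =>
    (hu x (hsub hx)).of_le one_le_two) (integrable_norm_gradient_sq hβ hβc) hpicone

end IntegralIdentities

section Truncation

variable {E : Type*} [NormedAddCommGroup E] {A : Set E} {w : E → ℝ} {f : ℝ → ℝ} {δ : ℝ}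

lemma tsupport_indicator_comp_subset {X : Type*} [TopologicalSpace X] {A : Set X} {w : X → ℝ}
    (hclosed : IsClosed {x ∈ A | δ ≤ w x}) (hf0 : ∀ t ≤ δ, f t = 0) :
    tsupport (A.indicator (f ∘ w)) ⊆ {x ∈ A | δ ≤ w x} := by
  refine closure_minimal (fun x hx => ?_) hclosed
  obtain ⟨hxA, hfx⟩ := indicator_apply_ne_zero.mp hx
  exact ⟨hxA, le_of_not_ge fun h => hfx (hf0 _ h)⟩

lemma hasCompactSupport_indicator_comp {X : Type*} [TopologicalSpace X] [T2Space X] {A : Set X}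
    {w : X → ℝ} (hcompact : IsCompact {x ∈ A | δ ≤ w x})
    (hf0 : ∀ t ≤ δ, f t = 0) : HasCompactSupport (A.indicator (f ∘ w)) :=
  hcompact.of_isClosed_subset (isClosed_tsupport _)
    (tsupport_indicator_comp_subset hcompact.isClosed hf0)

lemma indicator_eventuallyEq_of_mem {X : Type*} [TopologicalSpace X] {A : Set X} {g : X → ℝ}
    {x : X} (hA : IsOpen A) (hx : x ∈ A) : A.indicator g =ᶠ[𝓝 x] g :=
  (eqOn_indicator (f := g)).eventuallyEq_of_mem (hA.mem_nhds hx)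

lemma contDiff_indicator_comp [NormedSpace ℝ E] {n : WithTop ℕ∞} (hA : IsOpen A)
    (hw : ContDiffOn ℝ n w A) (hclosed : IsClosed {x ∈ A | δ ≤ w x}) (hf : ContDiff ℝ n f)
    (hf0 : ∀ t ≤ δ, f t = 0) :
    ContDiff ℝ n (A.indicator (f ∘ w)) := by
  refine contDiff_of_contDiffAt_tsupport fun x hx => ?_
  have hxA : x ∈ A := (tsupport_indicator_comp_subset hclosed hf0 hx).1
  exact (hf.contDiffAt.comp x (hw.contDiffAt (hA.mem_nhds hxA))).congr_of_eventuallyEq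
    (indicator_eventuallyEq_of_mem hA hxA)

variable [InnerProductSpace ℝ E] [FiniteDimensional ℝ E]
  [MeasurableSpace E] [BorelSpace E] {ν : Measure E} [ν.IsAddHaarMeasure]

lemma integral_norm_gradient_truncation_sq_le (hA : IsOpen A) (hw : ContDiffOn ℝ 2 w A)
    (hcompact : IsCompact {x ∈ A | δ ≤ w x}) (hf : ContDiff ℝ 1 f) (hf0 : ∀ t ≤ δ, f t = 0)
    (hf' : ∀ t, deriv f t ∈ Icc 0 1) :
    ∫ x, ‖∇ (A.indicator (f ∘ w)) x‖ ^ 2 ∂ν ≤ ∫ x, A.indicator (f ∘ w) x * -Δ w x ∂ν := by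
  set β := A.indicator (f ∘ w)
  have hsupp : tsupport β ⊆ {x ∈ A | δ ≤ w x} :=
    tsupport_indicator_comp_subset hcompact.isClosed hf0
  have hβ : ContDiff ℝ 1 β :=
    contDiff_indicator_comp hA (hw.of_le one_le_two) hcompact.isClosed hf hf0
  have hβc : HasCompactSupport β := hasCompactSupport_indicator_comp hcompact hf0
  have hw2 (x) (hx : x ∈ tsupport β) : ContDiffAt ℝ 2 w x :=
    hw.contDiffAt (hA.mem_nhds (hsupp hx).1)
  have hpointwise (x) : ‖∇ β x‖ ^ 2 ≤ ⟪∇ β x, ∇ w x⟫_ℝ := by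
    by_cases hx : x ∈ tsupport β
    · rw [gradient_congr (indicator_eventuallyEq_of_mem hA (hsupp hx).1),
        gradient_comp (hf.contDiffAt.differentiableAt one_ne_zero)
          ((hw2 x hx).differentiableAt two_ne_zero), norm_smul, mul_pow, real_inner_smul_left,
        real_inner_self_eq_norm_sq, Real.norm_eq_abs, sq_abs]
      have hsq : deriv f (w x) ^ 2 ≤ deriv f (w x) :=
        pow_le_of_le_one (hf' _).1 (hf' _).2 two_ne_zero
      gcongr
    · simp [gradient_of_notMem_tsupport hx]
  rw [← integral_inner_gradient_eq_integral_mul_neg_laplacian hβ hβc hw2]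
  exact integral_mono (integrable_norm_gradient_sq hβ hβc)
    (integrable_inner_gradient_gradient hβ hβc fun x hx => (hw2 x hx).of_le one_le_two) hpointwise

end Truncation

section SoftThreshold

/-- A smoothed positive part, used to truncate a function to its superlevel sets `{w ≥ δ}`: it is
`C¹` for `δ > 0`, vanishes on `(-∞, δ]`, has slopes in `[0, 1]`, and tends to `max t 0` as `δ → 0`.
-/
def softThreshold (δ t : ℝ) : ℝ := √(max (t - δ) 0 ^ 2 + δ ^ 2) - δ

lemma hasDerivAt_max_zero_sq (t : ℝ) : HasDerivAt (fun s : ℝ => max s 0 ^ 2) (2 * max t 0) t := by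
  refine hasDerivAt_of_hasDerivAt_of_ne' (x := 0) (g := fun s => 2 * max s 0) (fun s hs => ?_)
    (by fun_prop) (by fun_prop) t
  rcases hs.lt_or_gt with hneg | hpos
  · have hzero : (fun r : ℝ => max r 0 ^ 2) =ᶠ[𝓝 s] fun _ => 0 := by
      filter_upwards [gt_mem_nhds hneg] with r hr
      simp [hr.le]
    simpa [hneg.le] using (hasDerivAt_const s (0 : ℝ)).congr_of_eventuallyEq hzero
  · have hsq : (fun r : ℝ => max r 0 ^ 2) =ᶠ[𝓝 s] fun r => r ^ 2 := by
      filter_upwards [lt_mem_nhds hpos] with r hr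
      simp [hr.le]
    simpa [hpos.le] using (hasDerivAt_pow 2 s).congr_of_eventuallyEq hsq

variable {δ t : ℝ}

lemma softThreshold_eq_zero (hδ : 0 < δ) (ht : t ≤ δ) : softThreshold δ t = 0 := by
  rw [softThreshold, max_eq_right (sub_nonpos.mpr ht), zero_pow two_ne_zero, zero_add,
    Real.sqrt_sq hδ.le, sub_self]

lemma softThreshold_nonneg (δ t : ℝ) : 0 ≤ softThreshold δ t :=
  sub_nonneg.mpr (Real.le_sqrt_of_sq_le (le_add_of_nonneg_left (sq_nonneg _)))

lemma softThreshold_le (hδ : 0 ≤ δ) (ht : 0 ≤ t) : softThreshold δ t ≤ t := by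
  rw [softThreshold, sub_le_iff_le_add, Real.sqrt_le_left (by positivity)]
  have hmax : max (t - δ) 0 ≤ t := max_le (by linarith) ht
  have hsq : max (t - δ) 0 ^ 2 ≤ t ^ 2 := by gcongr
  nlinarith [mul_nonneg ht hδ]

lemma hasDerivAt_softThreshold (hδ : 0 < δ) (t : ℝ) : HasDerivAt (softThreshold δ)
    (max (t - δ) 0 / √(max (t - δ) 0 ^ 2 + δ ^ 2)) t := by
  have hshift : HasDerivAt (fun s : ℝ => max (s - δ) 0 ^ 2) (2 * max (t - δ) 0) t :=
    HasDerivAt.comp_sub_const t δ (hasDerivAt_max_zero_sq (t - δ))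
  have hsqrt := ((hshift.add_const (δ ^ 2)).sqrt (by positivity)).sub_const δ
  exact hsqrt.congr_deriv (mul_div_mul_left _ _ two_ne_zero)

lemma contDiff_softThreshold (hδ : 0 < δ) : ContDiff ℝ 1 (softThreshold δ) := by
  rw [contDiff_one_iff_deriv, funext fun t => (hasDerivAt_softThreshold hδ t).deriv]
  refine ⟨fun t => (hasDerivAt_softThreshold hδ t).differentiableAt, ?_⟩
  exact Continuous.div (by fun_prop) (by fun_prop) fun t => by positivity

lemma deriv_softThreshold_mem_Icc (hδ : 0 < δ) (t : ℝ) :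
    deriv (softThreshold δ) t ∈ Icc 0 1 := by
  rw [(hasDerivAt_softThreshold hδ t).deriv]
  refine ⟨by positivity, div_le_one_of_le₀ (Real.le_sqrt_of_sq_le ?_) (Real.sqrt_nonneg _)⟩
  exact le_add_of_nonneg_right (sq_nonneg δ)

lemma tendsto_softThreshold (ht : 0 ≤ t) :
    Tendsto (fun δ => softThreshold δ t) (𝓝 0) (𝓝 t) := by
  have hcont : Continuous fun δ => softThreshold δ t := by
    unfold softThreshold
    fun_prop
  convert hcont.tendsto 0 using 2
  simp [softThreshold, ht]

end SoftThreshold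

section WeightedIntegrals

variable {X : Type*} [TopologicalSpace X] [MeasurableSpace X] {ν : Measure X} {A : Set X}
  {V w : X → ℝ}

lemma tendsto_setIntegral_mul_truncation {F : ℝ → ℝ → ℝ} [OpensMeasurableSpace X]
    (hA : MeasurableSet A) (hV : ContinuousOn V A) (hV0 : ∀ x ∈ A, 0 < V x)
    (hw : ContinuousOn w A) (hw0 : ∀ x ∈ A, 0 < w x)
    (hint : IntegrableOn (fun x => V x * w x ^ 2) A ν)
    (hF : ∀ δ > 0, Continuous (F δ)) (hFle : ∀ δ > 0, ∀ t > 0, |F δ t| ≤ t ^ 2)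
    (hFlim : ∀ t > 0, Tendsto (F · t) (𝓝[>] 0) (𝓝 (t ^ 2))) :
    Tendsto (fun δ => ∫ x in A, V x * F δ (w x) ∂ν) (𝓝[>] 0)
      (𝓝 (∫ x in A, V x * w x ^ 2 ∂ν)) := by
  refine tendsto_integral_filter_of_dominated_convergence (fun x => V x * w x ^ 2) ?_ ?_ hint ?_
  · filter_upwards [self_mem_nhdsWithin] with δ hδ
    exact (hV.mul ((hF δ hδ).comp_continuousOn hw)).aestronglyMeasurable hA
  · filter_upwards [self_mem_nhdsWithin] with δ hδ
    filter_upwards [ae_restrict_mem hA] with x hx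
    rw [Real.norm_eq_abs, abs_mul, abs_of_pos (hV0 x hx)]
    exact mul_le_mul_of_nonneg_left (hFle δ hδ _ (hw0 x hx)) (hV0 x hx).le
  · filter_upwards [ae_restrict_mem hA] with x hx
    exact (hFlim _ (hw0 x hx)).const_mul _

lemma setIntegral_mul_sq_pos [OpensMeasurableSpace X] [ν.IsOpenPosMeasure]
    (hA : IsOpen A) (hne : A.Nonempty) (hV0 : ∀ x ∈ A, 0 < V x) (hw0 : ∀ x ∈ A, 0 < w x)
    (hint : IntegrableOn (fun x => V x * w x ^ 2) A ν) :
    0 < ∫ x in A, V x * w x ^ 2 ∂ν := by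
  have hpos (x) (hx : x ∈ A) : 0 < V x * w x ^ 2 := mul_pos (hV0 x hx) (pow_pos (hw0 x hx) 2)
  rw [setIntegral_pos_iff_support_of_nonneg_ae
    (ae_restrict_of_forall_mem hA.measurableSet fun x hx => (hpos x hx).le) hint,
    inter_eq_right.mpr fun x hx => Function.mem_support.mpr (hpos x hx).ne']
  exact hA.measure_pos ν hne

end WeightedIntegrals

section Comparison

variable {E : Type*} [NormedAddCommGroup E] [InnerProductSpace ℝ E] [FiniteDimensional ℝ E]
  [MeasurableSpace E] [BorelSpace E] {ν : Measure E} [ν.IsAddHaarMeasure] {A : Set E}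
  {u w V : E → ℝ} {f : ℝ → ℝ} {δ μ μ' : ℝ}

lemma mul_integral_sq_le_integral_norm_gradient_sq (hA : IsOpen A) (hV : ContinuousOn V A)
    (hu : ContDiffOn ℝ 2 u A) (hu0 : ∀ x ∈ A, 0 < u x)
    (hsuper : ∀ x ∈ A, μ * (V x * u x) ≤ -Δ u x) {β : E → ℝ} (hβ : ContDiff ℝ 1 β)
    (hβc : HasCompactSupport β) (hβA : tsupport β ⊆ A) :
    μ * ∫ x, V x * β x ^ 2 ∂ν ≤ ∫ x, ‖∇ β x‖ ^ 2 ∂ν := by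
  have hu2 (x) (hx : x ∈ tsupport β) : ContDiffAt ℝ 2 u x := hu.contDiffAt (hA.mem_nhds (hβA hx))
  have hu0' (x) (hx : x ∈ tsupport β) : u x ≠ 0 := (hu0 x (hβA hx)).ne'
  have hpotential : Integrable (fun x => μ * (V x * β x ^ 2)) ν := by
    have := integrable_mul_of_hasCompactSupport (ν := ν) (g := fun x => μ * (V x * β x))
      hβ.continuous hβc fun x hx => continuousAt_const.mul
        ((hV.continuousAt (hA.mem_nhds (hβA hx))).mul hβ.continuous.continuousAt)
    exact this.congr (.of_forall fun x => by ring)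
  have hlaplacian : Integrable (fun x => β x ^ 2 / u x * -Δ u x) ν := by
    have := integrable_mul_of_hasCompactSupport (ν := ν) (g := fun x => β x / u x * -Δ u x)
      hβ.continuous hβc fun x hx => (hβ.continuous.continuousAt.div (hu2 x hx).continuousAt
        (hu0' x hx)).mul (continuousAt_laplacian (hu2 x hx)).neg
    exact this.congr (.of_forall fun x => by ring)
  have hpointwise (x) : μ * (V x * β x ^ 2) ≤ β x ^ 2 / u x * -Δ u x := by
    by_cases hx : x ∈ tsupport β
    · calc
        μ * (V x * β x ^ 2) = β x ^ 2 / u x * (μ * (V x * u x)) := by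
          field_simp [hu0' x hx]
        _ ≤ β x ^ 2 / u x * -Δ u x := by
          have := hu0 x (hβA hx)
          gcongr
          exact hsuper x (hβA hx)
    · simp [image_eq_zero_of_notMem_tsupport hx]
  calc
    μ * ∫ x, V x * β x ^ 2 ∂ν = ∫ x, μ * (V x * β x ^ 2) ∂ν := (integral_const_mul _ _).symm
    _ ≤ ∫ x, β x ^ 2 / u x * -Δ u x ∂ν := integral_mono hpotential hlaplacian hpointwise
    _ ≤ ∫ x, ‖∇ β x‖ ^ 2 ∂ν := integral_sq_div_mul_neg_laplacian_le hβ hβc hu2 hu0'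

lemma integral_norm_gradient_truncation_sq_le_mul (hA : IsOpen A) (hV : ContinuousOn V A)
    (hw : ContDiffOn ℝ 2 w A) (hsub : ∀ x ∈ A, -Δ w x ≤ μ' * (V x * w x))
    (hcompact : IsCompact {x ∈ A | δ ≤ w x}) (hf : ContDiff ℝ 1 f) (hf0 : ∀ t ≤ δ, f t = 0)
    (hf' : ∀ t, deriv f t ∈ Icc 0 1) :
    ∫ x, ‖∇ (A.indicator (f ∘ w)) x‖ ^ 2 ∂ν ≤
      μ' * ∫ x, V x * (A.indicator (f ∘ w) x * w x) ∂ν := by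
  have hfnonneg (t : ℝ) : 0 ≤ f t := by
    have hmono := monotone_of_deriv_nonneg (hf.differentiable one_ne_zero) fun t => (hf' t).1
    exact (hf0 _ (min_le_right t δ)).symm.trans_le (hmono (min_le_left t δ))
  have hintegrable {g : E → ℝ} (hg : ContinuousOn g A) :
      Integrable (fun x => A.indicator (f ∘ w) x * g x) ν :=
    integrable_mul_of_hasCompactSupport (contDiff_indicator_comp hA (hw.of_le one_le_two)
      hcompact.isClosed hf hf0).continuous (hasCompactSupport_indicator_comp hcompact hf0)
      fun x hx => hg.continuousAt
        (hA.mem_nhds (tsupport_indicator_comp_subset hcompact.isClosed hf0 hx).1)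
  have hlaplacian : ContinuousOn (fun x => -Δ w x) A := fun x hx =>
    (continuousAt_laplacian (hw.contDiffAt (hA.mem_nhds hx))).neg.continuousWithinAt
  calc
    _ ≤ ∫ x, A.indicator (f ∘ w) x * -Δ w x ∂ν :=
      integral_norm_gradient_truncation_sq_le hA hw hcompact hf hf0 hf'
    _ ≤ ∫ x, A.indicator (f ∘ w) x * (μ' * (V x * w x)) ∂ν := by
      refine integral_mono (hintegrable hlaplacian)
        (hintegrable (continuousOn_const.mul (hV.mul hw.continuousOn))) fun x => ?_
      by_cases hx : x ∈ A
      · simp only [indicator_of_mem hx]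
        exact mul_le_mul_of_nonneg_left (hsub x hx) (hfnonneg _)
      · simp [indicator_of_notMem hx]
    _ = μ' * ∫ x, V x * (A.indicator (f ∘ w) x * w x) ∂ν := by
      rw [← integral_const_mul]
      congr with x
      ring

lemma mul_setIntegral_truncation_sq_le (hA : IsOpen A) (hV : ContinuousOn V A)
    (hu : ContDiffOn ℝ 2 u A) (hu0 : ∀ x ∈ A, 0 < u x)
    (hsuper : ∀ x ∈ A, μ * (V x * u x) ≤ -Δ u x) (hw : ContDiffOn ℝ 2 w A)
    (hsub : ∀ x ∈ A, -Δ w x ≤ μ' * (V x * w x)) (hcompact : IsCompact {x ∈ A | δ ≤ w x})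
    (hf : ContDiff ℝ 1 f) (hf0 : ∀ t ≤ δ, f t = 0) (hf' : ∀ t, deriv f t ∈ Icc 0 1) :
    μ * ∫ x in A, V x * f (w x) ^ 2 ∂ν ≤ μ' * ∫ x in A, V x * (f (w x) * w x) ∂ν := by
  have hleft : ∫ x in A, V x * f (w x) ^ 2 ∂ν =
      ∫ x, V x * A.indicator (f ∘ w) x ^ 2 ∂ν := by
    rw [← integral_indicator hA.measurableSet]
    congr with x
    by_cases hx : x ∈ A <;> simp [hx]
  have hright : ∫ x in A, V x * (f (w x) * w x) ∂ν =
      ∫ x, V x * (A.indicator (f ∘ w) x * w x) ∂ν := by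
    rw [← integral_indicator hA.measurableSet]
    congr with x
    by_cases hx : x ∈ A <;> simp [hx]
  rw [hleft, hright]
  exact (mul_integral_sq_le_integral_norm_gradient_sq hA hV hu hu0 hsuper
    (contDiff_indicator_comp hA (hw.of_le one_le_two) hcompact.isClosed hf hf0)
    (hasCompactSupport_indicator_comp hcompact hf0)
    ((tsupport_indicator_comp_subset hcompact.isClosed hf0).trans (sep_subset _ _))).trans
    (integral_norm_gradient_truncation_sq_le_mul hA hV hw hsub hcompact hf hf0 hf')

theorem le_of_supersolution_of_subsolution (hA : IsOpen A) (hne : A.Nonempty)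
    (hV : ContinuousOn V A) (hV0 : ∀ x ∈ A, 0 < V x)
    (hu : ContDiffOn ℝ 2 u A) (hu0 : ∀ x ∈ A, 0 < u x)
    (hsuper : ∀ x ∈ A, μ * (V x * u x) ≤ -Δ u x)
    (hw : ContDiffOn ℝ 2 w A) (hw0 : ∀ x ∈ A, 0 < w x)
    (hsub : ∀ x ∈ A, -Δ w x ≤ μ' * (V x * w x))
    (hint : IntegrableOn (fun x => V x * w x ^ 2) A ν)
    (hcompact : ∀ δ > 0, IsCompact {x ∈ A | δ ≤ w x}) : μ ≤ μ' := by
  have htruncated : ∀ᶠ δ in 𝓝[>] (0 : ℝ), μ * ∫ x in A, V x * softThreshold δ (w x) ^ 2 ∂ν ≤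
      μ' * ∫ x in A, V x * (softThreshold δ (w x) * w x) ∂ν := by
    filter_upwards [self_mem_nhdsWithin] with δ hδ
    exact mul_setIntegral_truncation_sq_le hA hV hu hu0 hsuper hw hsub (hcompact δ hδ)
      (contDiff_softThreshold hδ) (fun t => softThreshold_eq_zero hδ)
      (deriv_softThreshold_mem_Icc hδ)
  have hlim (t : ℝ) (ht : 0 < t) : Tendsto (softThreshold · t) (𝓝[>] 0) (𝓝 t) :=
    (tendsto_softThreshold ht.le).mono_left nhdsWithin_le_nhds
  have hleft : Tendsto (fun δ => ∫ x in A, V x * softThreshold δ (w x) ^ 2 ∂ν) (𝓝[>] 0)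
      (𝓝 (∫ x in A, V x * w x ^ 2 ∂ν)) := by
    refine tendsto_setIntegral_mul_truncation (F := fun δ t => softThreshold δ t ^ 2)
      hA.measurableSet hV hV0 hw.continuousOn hw0 hint
      (fun δ hδ => (contDiff_softThreshold hδ).continuous.pow 2)
      (fun δ hδ t ht => ?_) fun t ht => (hlim t ht).pow 2
    rw [abs_pow, abs_of_nonneg (softThreshold_nonneg δ t)]
    exact pow_le_pow_left₀ (softThreshold_nonneg δ t) (softThreshold_le hδ.le ht.le) 2
  have hright : Tendsto (fun δ => ∫ x in A, V x * (softThreshold δ (w x) * w x) ∂ν) (𝓝[>] 0)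
      (𝓝 (∫ x in A, V x * w x ^ 2 ∂ν)) := by
    refine tendsto_setIntegral_mul_truncation (F := fun δ t => softThreshold δ t * t)
      hA.measurableSet hV hV0 hw.continuousOn hw0 hint
      (fun δ hδ => (contDiff_softThreshold hδ).continuous.mul continuous_id)
      (fun δ hδ t ht => ?_) fun t ht => ?_
    · rw [abs_mul, abs_of_nonneg (softThreshold_nonneg δ t), abs_of_pos ht, pow_two]
      exact mul_le_mul_of_nonneg_right (softThreshold_le hδ.le ht.le) ht.le
    · simpa only [pow_two] using (hlim t ht).mul_const t
  exact le_of_mul_le_mul_right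
    (le_of_tendsto_of_tendsto (hleft.const_mul μ) (hright.const_mul μ') htruncated)
    (setIntegral_mul_sq_pos hA hne hV0 hw0 hint)

end Comparison

section TruncatedCone

variable {E : Type*} [NormedAddCommGroup E] [NormedSpace ℝ E] {I : Set ℝ} {Ω K : Set E}

/-- The part of the cone over the set of directions `Ω` with distance from the vertex in `I`. -/
def truncatedCone (I : Set ℝ) (Ω : Set E) : Set E := {x | ‖x‖ ∈ I ∧ ‖x‖⁻¹ • x ∈ Ω}

lemma truncatedCone_mono {J : Set ℝ} (hIJ : I ⊆ J) (hΩK : Ω ⊆ K) :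
    truncatedCone I Ω ⊆ truncatedCone J K :=
  fun _ hx => ⟨hIJ hx.1, hΩK hx.2⟩

lemma ne_zero_of_mem_truncatedCone (h0 : 0 ∉ I) {x : E} (hx : x ∈ truncatedCone I Ω) : x ≠ 0 :=
  fun h => h0 (by simpa [h] using hx.1)

lemma truncatedCone_nonempty (hI : (I ∩ Ioi 0).Nonempty) (hΩ : Ω ⊆ Metric.sphere 0 1)
    (hne : Ω.Nonempty) : (truncatedCone I Ω).Nonempty := by
  obtain ⟨r, hrI, hr⟩ := hI
  obtain ⟨ω, hω⟩ := hne
  have hnorm : ‖r • ω‖ = r := by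
    rw [norm_smul, mem_sphere_zero_iff_norm.mp (hΩ hω), mul_one, Real.norm_of_nonneg hr.le]
  exact ⟨r • ω, by rwa [hnorm], by rwa [hnorm, inv_smul_smul₀ hr.ne']⟩

lemma continuousOn_inv_norm_smul_self (h0 : 0 ∉ I) :
    ContinuousOn (fun x : E => ‖x‖⁻¹ • x) {x | ‖x‖ ∈ I} :=
  (continuousOn_id.norm.inv₀ fun _ hx h => h0 (h ▸ hx)).smul continuousOn_id

lemma isOpen_truncatedCone (hI : IsOpen I) (h0 : 0 ∉ I)
    (hΩ : IsOpen {ω : Metric.sphere (0 : E) 1 | (ω : E) ∈ Ω}) : IsOpen (truncatedCone I Ω) := by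
  obtain ⟨U, hU, hUΩ⟩ := isOpen_induced_iff.mp hΩ
  have heq : truncatedCone I Ω = {x | ‖x‖ ∈ I} ∩ (fun x => ‖x‖⁻¹ • x) ⁻¹' U := by
    ext x
    refine and_congr_right fun hx => ?_
    have hnorm : ‖x‖ ≠ 0 := fun h => h0 (h ▸ hx)
    have hsphere : ‖x‖⁻¹ • x ∈ Metric.sphere (0 : E) 1 := by simp [norm_smul, hnorm]
    exact (Set.ext_iff.mp hUΩ ⟨_, hsphere⟩).symm
  rw [heq]
  exact (continuousOn_inv_norm_smul_self h0).isOpen_inter_preimage (hI.preimage continuous_norm) hU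

lemma isCompact_truncatedCone (hI : IsCompact I) (h0 : 0 ∉ I) (hK : IsCompact K) :
    IsCompact (truncatedCone I K) := by
  have hclosed : IsClosed (truncatedCone I K) :=
    (continuousOn_inv_norm_smul_self h0).preimage_isClosed_of_isClosed
      (hI.isClosed.preimage continuous_norm) hK.isClosed
  refine ((hI.prod hK).image continuous_smul).of_isClosed_subset hclosed fun x hx => ?_
  exact ⟨(‖x‖, ‖x‖⁻¹ • x), hx,
    smul_inv_smul₀ (norm_ne_zero_iff.mpr (ne_zero_of_mem_truncatedCone h0 hx)) x⟩

lemma isCompact_sep_le_of_eq_zero_diff {X : Type*} [TopologicalSpace X] [T2Space X] {A D : Set X}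
    {w : X → ℝ} {δ : ℝ} (hD : IsCompact D) (hAD : A ⊆ D) (hw : ContinuousOn w D)
    (hw0 : ∀ x ∈ D \ A, w x = 0) (hδ : 0 < δ) : IsCompact {x ∈ A | δ ≤ w x} := by
  have heq : {x ∈ A | δ ≤ w x} = D ∩ w ⁻¹' Ici δ := by
    ext x
    refine ⟨fun hx => ⟨hAD hx.1, hx.2⟩, fun hx => ⟨by_contra fun hxA => ?_, hx.2⟩⟩
    exact hδ.not_ge (hx.2.trans_eq (hw0 x ⟨hx.1, hxA⟩))
  rw [heq]
  exact hD.of_isClosed_subset (hw.preimage_isClosed_of_isClosed hD.isClosed isClosed_Ici)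
    inter_subset_left

end TruncatedCone

section DampedSine

/-- The solution `exp (-a t) sin (κ (t - τ))` of the underdamped oscillator
`k'' + 2 a k' + (a ^ 2 + κ ^ 2) k = 0` which vanishes at `τ`. -/
def dampedSine (a κ τ t : ℝ) : ℝ := Real.exp (-(a * t)) * Real.sin (κ * (t - τ))

variable {a κ τ t : ℝ}

lemma contDiff_dampedSine {n : WithTop ℕ∞} : ContDiff ℝ n (dampedSine a κ τ) := by
  unfold dampedSine
  fun_prop

lemma hasDerivAt_exp_mul_sin_add_cos (a κ τ c d t : ℝ) :
    HasDerivAt (fun s => Real.exp (-(a * s)) *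
      (c * Real.sin (κ * (s - τ)) + d * Real.cos (κ * (s - τ))))
      (Real.exp (-(a * t)) * ((-a * c - κ * d) * Real.sin (κ * (t - τ)) +
        (κ * c - a * d) * Real.cos (κ * (t - τ)))) t := by
  have hphase : HasDerivAt (fun s => κ * (s - τ)) κ t := by
    simpa using ((hasDerivAt_id t).sub_const τ).const_mul κ
  have hexp : HasDerivAt (fun s => Real.exp (-(a * s))) (Real.exp (-(a * t)) * -a) t := by
    simpa using (((hasDerivAt_id t).const_mul a).neg).exp
  refine (hexp.mul ((hphase.sin.const_mul c).fun_add (hphase.cos.const_mul d))).congr_deriv ?_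
  ring

lemma deriv_deriv_dampedSine_add (a κ τ t : ℝ) :
    deriv (deriv (dampedSine a κ τ)) t + 2 * a * deriv (dampedSine a κ τ) t =
      -(a ^ 2 + κ ^ 2) * dampedSine a κ τ t := by
  have hself : dampedSine a κ τ = fun s => Real.exp (-(a * s)) *
      (1 * Real.sin (κ * (s - τ)) + 0 * Real.cos (κ * (s - τ))) := by
    ext s
    simp [dampedSine]
  have hderiv := funext fun s => (hasDerivAt_exp_mul_sin_add_cos a κ τ 1 0 s).deriv
  rw [hself, hderiv, (hasDerivAt_exp_mul_sin_add_cos _ _ _ _ _ t).deriv]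
  ring

lemma dampedSine_pos (hκ : 0 < κ) (ht : t ∈ Ioo τ (τ + π / κ)) : 0 < dampedSine a κ τ t := by
  refine mul_pos (Real.exp_pos _) (Real.sin_pos_of_pos_of_lt_pi ?_ ?_)
  · exact mul_pos hκ (sub_pos.mpr ht.1)
  · rw [mul_comm, ← lt_div_iff₀ hκ]
    linarith [ht.2]

lemma dampedSine_left (a κ τ : ℝ) : dampedSine a κ τ τ = 0 := by simp [dampedSine]

lemma dampedSine_right (hκ : κ ≠ 0) : dampedSine a κ τ (τ + π / κ) = 0 := by
  simp [dampedSine, mul_div_cancel₀ _ hκ]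

lemma neg_laplacian_dampedSine_mul {E : Type*} [NormedAddCommGroup E] [InnerProductSpace ℝ E]
    [FiniteDimensional ℝ E] {f : E → ℝ} {x : E} {lam : ℝ} (ha : 2 * a = finrank ℝ E - 2)
    (hx : x ≠ 0) (hf : ContDiffAt ℝ 2 f x) (hf0 : ∀ t : ℝ, 0 < t → ∀ y, f (t • y) = f y)
    (heigen : Δ f x = -lam * (‖x‖ ^ 2)⁻¹ * f x) :
    -Δ (fun y => dampedSine a κ τ (Real.log ‖y‖) * f y) x =
      (lam + a ^ 2 + κ ^ 2) * ((‖x‖ ^ 2)⁻¹ * (dampedSine a κ τ (Real.log ‖x‖) * f x)) := by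
  rw [laplacian_comp_log_norm_mul hx contDiff_dampedSine.contDiffAt hf hf0, ← ha,
    deriv_deriv_dampedSine_add, heigen]
  ring

end DampedSine

section ConeModes

variable {N : ℕ} {Ω : Set (Euc N)} {lam1 : ℝ} {φ : Euc N → ℝ} {κ r μ : ℝ}

lemma laplacian_eq_lap (f : Euc N → ℝ) (x : Euc N) : Δ f x = lap N f x := by
  simp [laplacian_eq_iteratedFDeriv_orthonormalBasis f (EuclideanSpace.basisFun (Fin N) ℝ), lap]

lemma norm_rpow_neg_two (x : Euc N) : ‖x‖ ^ (-(2 : ℝ)) = (‖x‖ ^ 2)⁻¹ := by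
  rw [Real.rpow_neg (norm_nonneg x), Real.rpow_two]

/-- The oscillating mode `|x| ^ (-(N - 2) / 2) sin (κ log (|x| / r)) φ (x / |x|)` of the cone, a
solution of `-Δ w = (C_{H,Ω} + κ ^ 2) |x|⁻² w`, up to a constant factor. -/
def coneMode (N : ℕ) (φ : Euc N → ℝ) (κ r : ℝ) (x : Euc N) : ℝ :=
  dampedSine ((N - 2) / 2) κ (Real.log r) (Real.log ‖x‖) * φ (‖x‖⁻¹ • x)

/-- The radii between the consecutive nodal spheres `|x| = r` and `|x| = r exp (π / κ)` of
`coneMode N φ κ r`. -/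
def nodalRadii (κ r : ℝ) : Set ℝ := Ioo r (r * Real.exp (π / κ))

lemma nodalRadii_subset_Ioi : nodalRadii κ r ⊆ Ioi r := fun _ hs => hs.1

lemma nodalRadii_nonempty (hr : 0 < r) (hκ : 0 < κ) : (nodalRadii κ r).Nonempty :=
  nonempty_Ioo.mpr (lt_mul_of_one_lt_right hr (Real.one_lt_exp_iff.mpr (by positivity)))

lemma closure_nodalRadii (hr : 0 < r) (hκ : 0 < κ) :
    closure (nodalRadii κ r) = Icc r (r * Real.exp (π / κ)) :=
  closure_Ioo (nonempty_Ioo.mp (nodalRadii_nonempty hr hκ)).ne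

lemma isCompact_closure_nodalRadii (hr : 0 < r) (hκ : 0 < κ) :
    IsCompact (closure (nodalRadii κ r)) := by
  rw [closure_nodalRadii hr hκ]
  exact isCompact_Icc

lemma zero_notMem_closure_nodalRadii (hr : 0 < r) (hκ : 0 < κ) : 0 ∉ closure (nodalRadii κ r) := by
  rw [closure_nodalRadii hr hκ]
  exact fun h => hr.not_ge h.1

lemma contDiffAt_coneMode {x : Euc N} (hx : x ≠ 0)
    (hφ : ContDiffAt ℝ 2 (fun y : Euc N => φ (‖y‖⁻¹ • y)) x) :
    ContDiffAt ℝ 2 (coneMode N φ κ r) x :=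
  (contDiff_dampedSine.contDiffAt.comp x (contDiffAt_log_norm hx)).mul hφ

lemma neg_laplacian_coneMode {x : Euc N} (hx : x ≠ 0)
    (hφ : ContDiffAt ℝ 2 (fun y : Euc N => φ (‖y‖⁻¹ • y)) x)
    (heigen : lap N (fun y => φ (‖y‖⁻¹ • y)) x = -lam1 * ‖x‖ ^ (-(2 : ℝ)) * φ (‖x‖⁻¹ • x)) :
    -Δ (coneMode N φ κ r) x =
      (CHconst N lam1 + κ ^ 2) * ((‖x‖ ^ 2)⁻¹ * coneMode N φ κ r x) := by
  rw [← laplacian_eq_lap, norm_rpow_neg_two] at heigen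
  refine neg_laplacian_dampedSine_mul ?_ hx hφ (fun t ht y => ?_) heigen
  · rw [finrank_euclideanSpace_fin, mul_div_cancel₀ _ two_ne_zero]
  · rw [norm_smul, Real.norm_of_nonneg ht.le, mul_inv, smul_smul, mul_right_comm,
      inv_mul_cancel₀ ht.ne', one_mul]

lemma coneMode_pos (hr : 0 < r) (hκ : 0 < κ) (hφ : ∀ ω ∈ Ω, 0 < φ ω) {x : Euc N}
    (hx : x ∈ truncatedCone (nodalRadii κ r) Ω) : 0 < coneMode N φ κ r x := by
  have hnorm : 0 < ‖x‖ := hr.trans hx.1.1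
  refine mul_pos (dampedSine_pos hκ ⟨Real.log_lt_log hr hx.1.1, ?_⟩) (hφ _ hx.2)
  rw [← Real.log_exp (π / κ), ← Real.log_mul hr.ne' (Real.exp_ne_zero _)]
  exact Real.log_lt_log hnorm hx.1.2

lemma continuousOn_coneMode {I : Set ℝ} {K : Set (Euc N)} (h0 : 0 ∉ I) (hφ : ContinuousOn φ K) :
    ContinuousOn (coneMode N φ κ r) (truncatedCone I K) := by
  have hlog : ContinuousOn (fun x : Euc N => Real.log ‖x‖) (truncatedCone I K) :=
    continuousOn_id.norm.log fun x hx => norm_ne_zero_iff.mpr (ne_zero_of_mem_truncatedCone h0 hx)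
  exact ((contDiff_dampedSine (n := 0)).continuous.comp_continuousOn hlog).mul
    (hφ.comp ((continuousOn_inv_norm_smul_self h0).mono fun x hx => hx.1) fun x hx => hx.2)

lemma coneMode_eq_zero (hr : 0 < r) (hκ : 0 < κ) (hφ : ∀ ω ∈ closure Ω \ Ω, φ ω = 0) {x : Euc N}
    (hx : x ∈ truncatedCone (closure (nodalRadii κ r)) (closure Ω) \
      truncatedCone (nodalRadii κ r) Ω) : coneMode N φ κ r x = 0 := by
  obtain ⟨⟨hradius, hdirection⟩, hout⟩ := hx
  by_cases hΩ : ‖x‖⁻¹ • x ∈ Ω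
  · rw [closure_nodalRadii hr hκ] at hradius
    have hendpoint : ‖x‖ = r ∨ ‖x‖ = r * Real.exp (π / κ) :=
      eq_endpoints_or_mem_Ioo_of_mem_Icc hradius |>.imp_right fun h => h.resolve_right fun h =>
        hout ⟨h, hΩ⟩
    rcases hendpoint with hinner | houter
    · rw [coneMode, hinner, dampedSine_left, zero_mul]
    · rw [coneMode, houter, Real.log_mul hr.ne' (Real.exp_ne_zero _), Real.log_exp,
        dampedSine_right hκ.ne', zero_mul]
  · rw [coneMode, hφ _ ⟨hdirection, hΩ⟩, mul_zero]

lemma integrableOn_inv_norm_sq_mul_coneMode_sq {ν : Measure (Euc N)} [IsFiniteMeasureOnCompacts ν]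
    (hr : 0 < r) (hκ : 0 < κ) (hφ : ContinuousOn φ (closure Ω)) (hΩ : IsCompact (closure Ω)) :
    IntegrableOn (fun x => (‖x‖ ^ 2)⁻¹ * coneMode N φ κ r x ^ 2)
      (truncatedCone (nodalRadii κ r) Ω) ν := by
  have h0 := zero_notMem_closure_nodalRadii hr hκ
  have hcont : ContinuousOn (fun x => (‖x‖ ^ 2)⁻¹ * coneMode N φ κ r x ^ 2)
      (truncatedCone (closure (nodalRadii κ r)) (closure Ω)) :=
    ((continuousOn_id.norm.pow 2).inv₀ fun x hx => pow_ne_zero 2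
      (norm_ne_zero_iff.mpr (ne_zero_of_mem_truncatedCone h0 hx))).mul
      ((continuousOn_coneMode h0 hφ).pow 2)
  exact (hcont.integrableOn_compact (isCompact_truncatedCone
    (isCompact_closure_nodalRadii hr hκ) h0 hΩ)).mono_set
    (truncatedCone_mono subset_closure subset_closure)

lemma isCompact_superlevel_coneMode (hr : 0 < r) (hκ : 0 < κ) (hΩ : IsCompact (closure Ω))
    (hφ : ContinuousOn φ (closure Ω)) (hφ0 : ∀ ω ∈ closure Ω \ Ω, φ ω = 0) {δ : ℝ} (hδ : 0 < δ) :
    IsCompact {x ∈ truncatedCone (nodalRadii κ r) Ω | δ ≤ coneMode N φ κ r x} := by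
  have h0 := zero_notMem_closure_nodalRadii hr hκ
  exact isCompact_sep_le_of_eq_zero_diff
    (isCompact_truncatedCone (isCompact_closure_nodalRadii hr hκ) h0 hΩ)
    (truncatedCone_mono subset_closure subset_closure) (continuousOn_coneMode h0 hφ)
    (fun x hx => coneMode_eq_zero hr hκ hφ0 hx) hδ

theorem le_CHconst_add_sq_of_supersolution (hΩ : Ω ⊆ Metric.sphere 0 1)
    (hΩo : IsOpen {ω : Metric.sphere (0 : Euc N) 1 | (ω : Euc N) ∈ Ω})
    (hphi : DirichletEigenpair N Ω lam1 φ) (hr : 0 < r) (hκ : 0 < κ) {u : Euc N → ℝ}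
    (hu : ContDiffOn ℝ 2 u (truncatedCone (nodalRadii κ r) Ω))
    (hu0 : ∀ x ∈ truncatedCone (nodalRadii κ r) Ω, 0 < u x)
    (hsuper : ∀ x ∈ truncatedCone (nodalRadii κ r) Ω, μ * ((‖x‖ ^ 2)⁻¹ * u x) ≤ -Δ u x) :
    μ ≤ CHconst N lam1 + κ ^ 2 := by
  set A := truncatedCone (nodalRadii κ r) Ω
  have h0 : 0 ∉ nodalRadii κ r := fun h => zero_notMem_closure_nodalRadii hr hκ (subset_closure h)
  have hA : IsOpen A := isOpen_truncatedCone isOpen_Ioo h0 hΩo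
  have hne : A.Nonempty := truncatedCone_nonempty
    ((nodalRadii_nonempty hr hκ).mono fun s hs => ⟨hs, hr.trans hs.1⟩) hΩ
    (closure_nonempty_iff.mp (hphi.max_one.imp fun _ h => h.1))
  have hA0 (x) (hx : x ∈ A) : x ≠ 0 := ne_zero_of_mem_truncatedCone h0 hx
  have hAcone : A ⊆ cone N Ω := fun x hx => ⟨hA0 x hx, hx.2⟩
  have hφ (x) (hx : x ∈ A) : ContDiffAt ℝ 2 (fun y : Euc N => φ (‖y‖⁻¹ • y)) x :=
    (hphi.smoothExt.mono hAcone).contDiffAt (hA.mem_nhds hx)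
  have hV : ContinuousOn (fun x : Euc N => (‖x‖ ^ 2)⁻¹) A :=
    (continuousOn_id.norm.pow 2).inv₀ fun x hx => pow_ne_zero 2 (norm_ne_zero_iff.mpr (hA0 x hx))
  have hV0 (x) (hx : x ∈ A) : 0 < (‖x‖ ^ 2)⁻¹ := by
    have := norm_pos_iff.mpr (hA0 x hx)
    positivity
  have hΩc : IsCompact (closure Ω) := (isCompact_sphere 0 1).closure_of_subset hΩ
  exact le_of_supersolution_of_subsolution (ν := volume) hA hne hV hV0 hu hu0 hsuper
    (fun x hx => (contDiffAt_coneMode (hA0 x hx) (hφ x hx)).contDiffWithinAt)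
    (fun x => coneMode_pos hr hκ hphi.pos)
    (fun x hx => (neg_laplacian_coneMode (hA0 x hx) (hφ x hx) (hphi.eigen x (hAcone hx))).le)
    (integrableOn_inv_norm_sq_mul_coneMode_sq hr hκ hphi.contOn hΩc)
    (fun δ => isCompact_superlevel_coneMode hr hκ hΩc hphi.contOn hphi.bdryZero)

end ConeModes

theorem no_solution_of_mu_gt_hardy_general {N : ℕ} {Ω : Set (Euc N)}
    (hΩ : Ω ⊆ Metric.sphere (0 : Euc N) 1)
    (hΩo : IsOpen {ω : Metric.sphere (0 : Euc N) 1 | (ω : Euc N) ∈ Ω})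
    {lam1 : ℝ} {φ : Euc N → ℝ} (hphi : DirichletEigenpair N Ω lam1 φ)
    {ρ μ : ℝ} (hμ : CHconst N lam1 < μ) :
    ¬ ∃ u : Euc N → ℝ, ContDiffOn ℝ 2 u (coneGT N ρ Ω) ∧ (∀ x ∈ coneGT N ρ Ω, 0 < u x) ∧
      ∀ x ∈ coneGT N ρ Ω, 0 ≤ -lap N u x - μ * ‖x‖ ^ (-(2 : ℝ)) * u x := by
  rintro ⟨u, hu, hu0, hsuper⟩
  obtain ⟨μ', hCμ', hμ'μ⟩ := exists_between hμ
  have hκ : 0 < √(μ' - CHconst N lam1) := Real.sqrt_pos.mpr (sub_pos.mpr hCμ')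
  have hκsq : CHconst N lam1 + √(μ' - CHconst N lam1) ^ 2 = μ' := by
    rw [Real.sq_sqrt (sub_nonneg.mpr hCμ'.le), add_sub_cancel]
  have hshell : truncatedCone (nodalRadii (√(μ' - CHconst N lam1)) (max ρ 1)) Ω ⊆ coneGT N ρ Ω :=
    truncatedCone_mono (nodalRadii_subset_Ioi.trans (Ioi_subset_Ioi (le_max_left ρ 1))) subset_rfl
  refine hμ'μ.not_ge (hκsq ▸ le_CHconst_add_sq_of_supersolution hΩ hΩo hphi
    (lt_max_of_lt_right one_pos) hκ (hu.mono hshell) (fun x hx => hu0 x (hshell hx)) fun x hx => ?_)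
  rw [laplacian_eq_lap, ← norm_rpow_neg_two, ← mul_assoc]
  linarith [hsuper x (hshell hx)]

/-- if `μ > C_{H,Ω}` then `(E)` has no positive solution in `C_Ω^ρ`. -/
theorem no_solution_of_mu_gt_hardy
    (N : ℕ) (hN : 2 ≤ N) (Ω : Set (Euc N)) (hΩ : IsConeDomain N Ω)
    (lam1 : ℝ) (φ : Euc N → ℝ) (hphi : DirichletEigenpair N Ω lam1 φ)
    (α p q ρ μ : ℝ) (hα : 0 ≤ α) (hαN : α < N) (hp : 0 < p) (hq : 0 < q) (hρ : 0 < ρ)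
    (hμ : CHconst N lam1 < μ) :
    ¬ ∃ u : Euc N → ℝ, IsPosSolE N ρ μ α p q Ω u :=
  fun ⟨u, hu, _, hu0, _, hE⟩ => no_solution_of_mu_gt_hardy_general hΩ.1 hΩ.2.2 hphi hμ
    ⟨u, hu, hu0, fun x hx => (mul_nonneg ENNReal.toReal_nonneg
      (Real.rpow_nonneg (hu0 x hx).le q)).trans (hE x hx)⟩
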